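/- Let G be a finite group and V a faithful irreducible complex representation of G. Then dim V divides |G| / |Z(G)|. -/

import Mathlib

/-!
Let `n = [G : Z(G)]` and `d = dim V`. By Schur's lemma the center acts on `V` by scalars, so the
operators `X ↦ ρ(g) X ρ(g)⁻¹` on `End V` depend only on `g` modulo `Z(G)`. Their sum over
`G ⧸ Z(G)` commutes with `ρ`, hence is a scalar, and comparing traces gives
`∑ q, ρ(q) X ρ(q)⁻¹ = (n / d) tr X`. Contracting this identity against rank one operators `X` gives
`∑ r, tr(ρ(r)⁻¹) ρ(r) = n / d`, and the two identities combine to `∑ q r, ρ(⁅q, r⁻¹⁆) = (n / d)²`.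
By Schur's theorem the commutator subgroup is finite, so the left-hand side is integral over `ℤ`.
Thus the rational number `n / d` is an algebraic integer, that is, an integer.
-/

section Algebra

theorem sum_trace_smul_eq_of_sum_mul_mul_eq {ι R M : Type*} [Fintype ι] [CommRing R]
    [AddCommGroup M] [Module R M] [Module.Free R M] [Module.Finite R M]
    {a b : ι → Module.End R M} {c : R}
    (h : ∀ X, ∑ i, a i * X * b i = (c * LinearMap.trace R M X) • 1) :
    ∑ i, LinearMap.trace R M (b i) • a i = c • 1 := by
  classical
  ext v
  let e := Module.Free.chooseBasis R M
  have htrace (i : ι) : LinearMap.trace R M (b i) = ∑ k, e.coord k (b i (e k)) := by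
    simp [LinearMap.trace_eq_matrix_trace R e, Matrix.trace, LinearMap.toMatrix_apply]
  have hrankOne k : ∑ i, e.coord k (b i (e k)) • a i v = (c * e.coord k v) • e k := by
    simpa [LinearMap.trace_smulRight] using congr($(h ((e.coord k).smulRight v)) (e k))
  calc (∑ i, LinearMap.trace R M (b i) • a i) v
      = ∑ k, ∑ i, e.coord k (b i (e k)) • a i v := by
        simp only [LinearMap.sum_apply, LinearMap.smul_apply, htrace, Finset.sum_smul]
        exact Finset.sum_comm
    _ = c • ∑ k, e.coord k v • e k := by simp only [hrankOne, mul_smul, Finset.smul_sum]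
    _ = (c • 1 : Module.End R M) v := by simp [e.sum_repr]

theorem isIntegral_sum_map_of_finite (R : Type*) {ι M A : Type*} [CommRing R] [Monoid M] [Finite M]
    [Ring A] [Algebra R A] (f : M →* A) (s : Finset ι) (x : ι → M) :
    IsIntegral R (∑ i ∈ s, f (x i)) := by
  have h : IsIntegral R (∑ i ∈ s, MonoidAlgebra.of R M (x i)) := Algebra.IsIntegral.isIntegral _
  simpa [map_sum] using h.map (MonoidAlgebra.lift R A M f)

theorem dvd_of_isIntegral_natCast_div {K : Type*} [Field K] [CharZero K] {m n : ℕ} (hm : m ≠ 0)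
    (h : IsIntegral ℤ (n / m : K)) : m ∣ n := by
  have hrat : IsIntegral ℤ (n / m : ℚ) := by
    rw [← isIntegral_algebraMap_iff (algebraMap ℚ K).injective]
    simpa using h
  obtain ⟨k, hk⟩ := IsIntegrallyClosed.isIntegral_iff.mp hrat
  rw [eq_div_iff (Nat.cast_ne_zero.mpr hm), eq_intCast] at hk
  exact Int.natCast_dvd_natCast.mp ⟨k, by rw [mul_comm]; exact_mod_cast hk.symm⟩

end Algebra

section Commutator

open scoped commutatorElement

variable {G : Type*} [Group G]

theorem commutatorElement_mul_left_of_mem_center (g h : G) {z : G} (hz : z ∈ Subgroup.center G) :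
    ⁅g * z, h⁆ = ⁅g, h⁆ := by
  rw [commutatorElement_def, commutatorElement_def, mul_assoc g z h,
    ← Subgroup.mem_center_iff.mp hz h]
  group

theorem commutatorElement_mul_right_of_mem_center (g h : G) {z : G} (hz : z ∈ Subgroup.center G) :
    ⁅g, h * z⁆ = ⁅g, h⁆ := by
  rw [← commutatorElement_inv, commutatorElement_mul_left_of_mem_center h g hz,
    commutatorElement_inv]

theorem finite_commutatorSet_of_finiteIndex_center [(Subgroup.center G).FiniteIndex] :
    Finite (commutatorSet G) := by
  refine (Set.finite_range fun p : (G ⧸ Subgroup.center G) × (G ⧸ Subgroup.center G) ↦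
    ⁅p.1.out, p.2.out⁆).subset ?_
  rintro _ ⟨g, h, rfl⟩
  obtain ⟨z, hz⟩ := QuotientGroup.mk_out_eq_mul (Subgroup.center G) g
  obtain ⟨w, hw⟩ := QuotientGroup.mk_out_eq_mul (Subgroup.center G) h
  refine ⟨(g, h), ?_⟩
  simp only [hz, hw, commutatorElement_mul_left_of_mem_center _ _ z.2,
    commutatorElement_mul_right_of_mem_center _ _ w.2]

end Commutator

section Invariants

variable {G k W : Type*} [Group G] [CommRing k] [AddCommGroup W] [Module k W]

theorem sum_quotient_out_mem_invariants (σ : Representation k G W) (H : Subgroup G)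
    [Fintype (G ⧸ H)] {w : W} (hw : ∀ h ∈ H, σ h w = w) :
    ∑ q : G ⧸ H, σ q.out w ∈ σ.invariants := by
  have hout (g : G) : σ (g : G ⧸ H).out w = σ g w := by
    obtain ⟨h, hh⟩ := QuotientGroup.mk_out_eq_mul H g
    rw [hh, map_mul, Module.End.mul_apply, hw h h.2]
  have hsmul (g : G) (q : G ⧸ H) : σ g (σ q.out w) = σ (g • q).out w := by
    induction q using QuotientGroup.induction_on with
    | H x => rw [hout, MulAction.Quotient.smul_mk, hout, smul_eq_mul, map_mul, Module.End.mul_apply]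
  intro g
  calc σ g (∑ q : G ⧸ H, σ q.out w) = ∑ q : G ⧸ H, σ (g • q).out w := by
        simp only [map_sum, hsmul]
    _ = ∑ q : G ⧸ H, σ q.out w :=
        (MulAction.toPerm g : Equiv.Perm (G ⧸ H)).bijective.sum_comp fun q ↦ σ q.out w

end Invariants

section Irreducible

variable {K V : Type*} [Field K] [IsAlgClosed K] [AddCommGroup V] [Module K V]
  [FiniteDimensional K V]

theorem exists_eq_smul_one_of_forall_commute {G : Type*} [Monoid G] (ρ : Representation K G V)
    [ρ.IsIrreducible] {T : Module.End K V} (hT : ∀ g, Commute T (ρ g)) : ∃ c : K, T = c • 1 := by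
  obtain ⟨c, hc⟩ :=
    Representation.IsIrreducible.algebraMap_intertwiningMap_bijective_of_isAlgClosed (ρ := ρ).2
      ⟨T, hT⟩
  exact ⟨c, (congrArg Representation.IntertwiningMap.toLinearMap hc).symm⟩

variable {G : Type*} [Group G] (ρ : Representation K G V) [ρ.IsIrreducible]

theorem linHom_self_apply_of_mem_center {z : G} (hz : z ∈ Subgroup.center G)
    (X : Module.End K V) : ρ.linHom ρ z X = X := by
  obtain ⟨c, hc⟩ := exists_eq_smul_one_of_forall_commute ρ fun g ↦
    Commute.map (Subgroup.mem_center_iff.mp hz g).symm ρ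
  have hcomm : ρ z * X = X * ρ z := by simp [hc]
  calc ρ.linHom ρ z X = ρ z * X * ρ z⁻¹ := rfl
    _ = X := by rw [hcomm, mul_assoc, ← map_mul, mul_inv_cancel, map_one, mul_one]

theorem exists_sum_conj_eq_smul_one [Fintype (G ⧸ Subgroup.center G)] (X : Module.End K V) :
    ∃ c : K, ∑ q : G ⧸ Subgroup.center G, ρ q.out * X * ρ q.out⁻¹ = c • 1 := by
  have hinv := sum_quotient_out_mem_invariants (ρ.linHom ρ) (Subgroup.center G)
    fun _ hz ↦ linHom_self_apply_of_mem_center ρ hz X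
  have hintertwining := (Representation.mem_linHom_invariants_iff_isIntertwining _).mp hinv
  exact exists_eq_smul_one_of_forall_commute ρ fun g ↦
    LinearMap.ext (hintertwining.isIntertwining g)

variable [CharZero K] [Fintype (G ⧸ Subgroup.center G)]

theorem sum_conj_eq_trace_smul_one (X : Module.End K V) :
    ∑ q : G ⧸ Subgroup.center G, ρ q.out * X * ρ q.out⁻¹ =
      ((Subgroup.center G).index / Module.finrank K V * LinearMap.trace K V X) • 1 := by
  have : Nontrivial V := IsSimpleModule.nontrivial (MonoidAlgebra K G) ρ.asModule
  have hd : (Module.finrank K V : K) ≠ 0 := Nat.cast_ne_zero.mpr Module.finrank_pos.ne'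
  obtain ⟨c, hc⟩ := exists_sum_conj_eq_smul_one ρ X
  have htrace_conj (g : G) : LinearMap.trace K V (ρ g * X * ρ g⁻¹) = LinearMap.trace K V X := by
    rw [LinearMap.trace_mul_comm, ← mul_assoc, ← map_mul, inv_mul_cancel, map_one, one_mul]
  have htrace : (Subgroup.center G).index * LinearMap.trace K V X = c * Module.finrank K V := by
    simpa [htrace_conj, Subgroup.index_eq_card] using congrArg (LinearMap.trace K V) hc
  rw [hc, div_mul_eq_mul_div, htrace, mul_div_cancel_right₀ _ hd]

open scoped commutatorElement in
theorem sum_commutator_eq_smul_one :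
    ∑ r : G ⧸ Subgroup.center G, ∑ q : G ⧸ Subgroup.center G, ρ ⁅q.out, r.out⁻¹⁆ =
      ((Subgroup.center G).index / Module.finrank K V : K) ^ 2 • 1 := by
  set c : K := (Subgroup.center G).index / Module.finrank K V
  have hsum (r : G ⧸ Subgroup.center G) : ∑ q : G ⧸ Subgroup.center G, ρ ⁅q.out, r.out⁻¹⁆ =
      c • LinearMap.trace K V (ρ r.out⁻¹) • ρ r.out :=
    calc ∑ q : G ⧸ Subgroup.center G, ρ ⁅q.out, r.out⁻¹⁆
        = (∑ q : G ⧸ Subgroup.center G, ρ q.out * ρ r.out⁻¹ * ρ q.out⁻¹) * ρ r.out := by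
          simp only [commutatorElement_def, inv_inv, map_mul, Finset.sum_mul]
      _ = c • LinearMap.trace K V (ρ r.out⁻¹) • ρ r.out := by
          rw [sum_conj_eq_trace_smul_one, smul_one_mul, mul_smul]
  rw [Finset.sum_congr rfl fun r _ ↦ hsum r, ← Finset.smul_sum,
    sum_trace_smul_eq_of_sum_mul_mul_eq (sum_conj_eq_trace_smul_one ρ), smul_smul, sq]

end Irreducible

open scoped commutatorElement in
theorem stmt_9_general {G K V : Type*} [Group G] [(Subgroup.center G).FiniteIndex]
    [Field K] [IsAlgClosed K] [CharZero K] [AddCommGroup V] [Module K V] [FiniteDimensional K V]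
    (ρ : Representation K G V) [ρ.IsIrreducible] :
    Module.finrank K V ∣ (Subgroup.center G).index := by
  have : Nontrivial V := IsSimpleModule.nontrivial (MonoidAlgebra K G) ρ.asModule
  have := Fintype.ofFinite (G ⧸ Subgroup.center G)
  have : Finite (commutatorSet G) := finite_commutatorSet_of_finiteIndex_center
  have hint := isIntegral_sum_map_of_finite ℤ (ρ.comp (commutator G).subtype) Finset.univ
    fun p : (G ⧸ Subgroup.center G) × (G ⧸ Subgroup.center G) ↦
      ⟨⁅p.2.out, p.1.out⁻¹⁆, Subgroup.commutator_mem_commutator trivial trivial⟩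
  have hsq : IsIntegral ℤ (algebraMap K (Module.End K V)
      (((Subgroup.center G).index / Module.finrank K V) ^ 2)) := by
    rw [Algebra.algebraMap_eq_smul_one, ← sum_commutator_eq_smul_one ρ, ← Fintype.sum_prod_type']
    exact hint
  rw [isIntegral_algebraMap_iff (FaithfulSMul.algebraMap_injective _ _)] at hsq
  exact dvd_of_isIntegral_natCast_div Module.finrank_pos.ne' (hsq.of_pow two_pos)

/-- If `V` is a faithful irreducible complex representation of a finite group `G`, then
`dim V` divides `|G| / |Z(G)|`. -/
theorem stmt_9 (G V : Type*) [Group G] [Fintype G]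
    [AddCommGroup V] [Module ℂ V] [FiniteDimensional ℂ V]
    (ρ : Representation ℂ G V)
    (hfaith : Function.Injective ρ)
    (hirr : IsSimpleModule (MonoidAlgebra ℂ G) ρ.asModule) :
    Module.finrank ℂ V ∣ Nat.card G / Nat.card (Subgroup.center G) := by
  have := ρ.irreducible_iff_isSimpleModule_asModule.mpr hirr
  rw [Nat.div_eq_of_eq_mul_left Nat.card_pos (Subgroup.center G).index_mul_card.symm]
  exact stmt_9_general ρ
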